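/- arXiv:1705.06213 — 3 statements merged into one kernel-verified Lean document; each statement's English description precedes it below -/
import Mathlib

section
/- Let G be a group acting without edge inversions on a simplicial tree T, let h1, h2 ∈ G be hyperbolic elements, and let n be a positive integer. If diam(Axis(h1) ∩ Axis(h2)) < n·min{τ(h1), τ(h2)} (in particular, if the intersection of the axes is empty), then h1^n and h2^n freely generate a rank 2 free subgroup of G. -/
open SimpleGraph Pointwise

section TreeDefs

variable {G : Type*} [Group G]

/-- The action of `G` on the vertices preserves adjacency. -/
def ActsByAut (G : Type*) [Group G] {V : Type*} [MulAction G V] (T : SimpleGraph V) : Prop :=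
  ∀ (g : G) (v w : V), T.Adj v w → T.Adj (g • v) (g • w)

/-- The action has no edge inversions: no element swaps the endpoints of an edge. -/
def NoEdgeInversion (G : Type*) [Group G] {V : Type*} [MulAction G V] (T : SimpleGraph V) : Prop :=
  ∀ (g : G) (v w : V), T.Adj v w → ¬(g • v = w ∧ g • w = v)

/-- The set of vertices fixed by `g`. -/
def Fixed (V : Type*) [MulAction G V] (g : G) : Set V := {v | g • v = v}

/-- `g` is elliptic: it fixes some vertex. -/
def IsElliptic (V : Type*) [MulAction G V] (g : G) : Prop := ∃ v : V, g • v = v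

/-- `g` is hyperbolic: it fixes no vertex. -/
def IsHyperbolic (V : Type*) [MulAction G V] (g : G) : Prop := ¬ ∃ v : V, g • v = v

/-- Translation length of `g`: the infimum of `d(v, g • v)` over all vertices `v`. -/
noncomputable def transLen {V : Type*} [MulAction G V] (T : SimpleGraph V) (g : G) : ℕ :=
  ⨅ v : V, T.dist v (g • v)

/-- The axis of a (hyperbolic) element: the vertices moved exactly the translation length. -/
noncomputable def Axis {V : Type*} [MulAction G V] (T : SimpleGraph V) (g : G) : Set V :=
  {v | T.dist v (g • v) = transLen T g}

/-- Diameter (in `ℕ∞`) of a set of vertices: the sup of pairwise simplicial distances. -/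
noncomputable def setDiam {V : Type*} (T : SimpleGraph V) (S : Set V) : ℕ∞ :=
  ⨆ v ∈ S, ⨆ w ∈ S, (T.dist v w : ℕ∞)

/-- Minimal simplicial distance between two sets of vertices. -/
noncomputable def setDist {V : Type*} (T : SimpleGraph V) (A B : Set V) : ℕ :=
  sInf {n : ℕ | ∃ v ∈ A, ∃ w ∈ B, T.dist v w = n}

/-- The action of `G` on `T` is `k`-acylindrical: the fixed-point set of every nontrivial
elliptic element has diameter at most `k`. -/
def AcylindricalAction {V : Type*} (T : SimpleGraph V) (G : Type*) [Group G] [MulAction G V]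
    (k : ℕ) : Prop :=
  ∀ g : G, g ≠ 1 → IsElliptic V g → setDiam T (Fixed V g) ≤ (k : ℕ∞)

/-- `a` and `b` generate a rank 2 free product in `G`: the canonical homomorphism
`⟨a⟩ ∗ ⟨b⟩ → G` from the free product of the cyclic subgroups generated by `a` and `b`
is injective. -/
def IsRank2FreeProduct {G : Type*} [Group G] (a b : G) : Prop :=
  Function.Injective
    (Monoid.Coprod.lift (Subgroup.zpowers a).subtype (Subgroup.zpowers b).subtype)

/-- `a` and `b` freely generate a rank 2 free subgroup of `G`: the homomorphism from the
free group on two generators sending the generators to `a` and `b` is injective. -/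
def FreelyGeneratesFreeSubgroup {G : Type*} [Group G] (a b : G) : Prop :=
  Function.Injective ((FreeGroup.lift (fun i : Bool => if i then a else b)) : FreeGroup Bool →* G)

/-- `a` and `b` freely generate a rank 2 free subsemigroup of `G`: the monoid homomorphism
from the free monoid on two generators sending the generators to `a` and `b` is injective. -/
def FreelyGeneratesFreeSubsemigroup {G : Type*} [Monoid G] (a b : G) : Prop :=
  Function.Injective ((FreeMonoid.lift (fun i : Bool => if i then a else b)) : FreeMonoid Bool →* G)

/-- A line in a simplicial tree: the image of an isometric embedding of `ℤ`. -/
def IsLine {V : Type*} (T : SimpleGraph V) (L : Set V) : Prop :=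
  ∃ f : ℤ → V, (∀ m n : ℤ, T.dist (f m) (f n) = (m - n).natAbs) ∧ L = Set.range f

end TreeDefs

/-!
A hyperbolic `h` of translation length `τ` shifts a geodesic line inside its axis by `τ`: the
translates of a shortest path from `v` to `h • v`, where `d(v, h • v) = τ`, fit together without
backtracking, and in a tree a path without backtracking is geodesic. The nearest-point projection
to that line, read as an integer coordinate of the vertices, is therefore raised by `n * τ` under
the action of `h ^ n`.

Two vertices with different projections to a line are joined by a geodesic that runs along the
line between these projections. Hence the projection of one of the two lines to the other has
diameter at most that of their overlap, which is less than `n * τ`, and every vertex projects into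
the image of the other line on at least one of the two lines. So the vertices projecting beyond the
image of the other line, at either end of either line, form four disjoint ping-pong sets.
-/

section Tree

variable {V : Type*} {T : SimpleGraph V} {f g : ℤ → V} {v w x y z : V}

theorem dist_eq_dist_add_one_of_adj_of_adj (hT : T.IsTree) (hxy : T.Adj x y) (hyz : T.Adj y z)
    (hxz : x ≠ z) (h : T.dist v y = T.dist v x + 1) : T.dist v z = T.dist v y + 1 := by
  refine (hT.dist_eq_dist_add_one_of_adj v hyz).resolve_left fun hzy => hxz ?_
  obtain ⟨p, hp⟩ := hT.connected.exists_walk_length_eq_dist v x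
  obtain ⟨q, hq⟩ := hT.connected.exists_walk_length_eq_dist v z
  have hp_path : (p.concat hxy).IsPath :=
    Walk.isPath_of_length_eq_dist _ (by rw [Walk.length_concat, hp, h])
  have hq_path : (q.concat hyz.symm).IsPath :=
    Walk.isPath_of_length_eq_dist _ (by rw [Walk.length_concat, hq, hzy])
  have hpq := (hT.existsUnique_path v y).unique hp_path hq_path
  simpa using congrArg Walk.penultimate hpq

theorem dist_eq_dist_add_dist_of_adj (hT : T.IsTree) (hxy : T.Adj x y)
    (hv : T.dist v y = T.dist v x + 1) (hw : T.dist w x = T.dist w y + 1) :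
    T.dist v w = T.dist v x + T.dist x w := by
  obtain ⟨p, hp⟩ := hT.connected.exists_walk_length_eq_dist y w
  induction p generalizing x with
  | nil => rw [hv, dist_eq_one_iff_adj.2 hxy]
  | @cons y z w hyz p ih =>
    have hzw : T.dist z w ≤ p.length := dist_le p
    have hwz := hT.dist_eq_dist_add_one_of_adj w hyz
    rw [Walk.length_cons] at hp
    rw [T.dist_comm (u := w), T.dist_comm (u := w)] at hw hwz
    have hvz := dist_eq_dist_add_one_of_adj_of_adj hT hxy hyz (by rintro rfl; omega) hv
    have hvw := ih hyz hvz (by rw [T.dist_comm, T.dist_comm (u := w)]; omega) (by omega)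
    omega

theorem dist_ray_eq_add (hT : T.IsTree) {r : ℕ → V} (hadj : ∀ k, T.Adj (r k) (r (k + 1)))
    (hne : ∀ k, r k ≠ r (k + 2)) (h : T.dist v (r 1) = T.dist v (r 0) + 1) (k : ℕ) :
    T.dist v (r k) = T.dist v (r 0) + k := by
  have hstep (k : ℕ) : T.dist v (r (k + 1)) = T.dist v (r k) + 1 := by
    induction k with
    | zero => exact h
    | succ k ih => exact dist_eq_dist_add_one_of_adj_of_adj hT (hadj k) (hadj (k + 1)) (hne k) ih
  induction k with
  | zero => rfl
  | succ k ih => rw [hstep, ih, add_assoc]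

/-- A bi-infinite geodesic, that is, an isometric embedding of `ℤ`; its range is a line in the
sense of `IsLine`. -/
def IsGeodesicLine (T : SimpleGraph V) (f : ℤ → V) : Prop :=
  ∀ i j : ℤ, T.dist (f i) (f j) = (i - j).natAbs

theorem isGeodesicLine_of_adj_of_ne (hT : T.IsTree) (hadj : ∀ t, T.Adj (f t) (f (t + 1)))
    (hne : ∀ t, f t ≠ f (t + 2)) : IsGeodesicLine T f := by
  intro i j
  wlog hij : i ≤ j generalizing i j
  · rw [T.dist_comm, this j i (by omega)]
    omega
  obtain ⟨k, rfl⟩ := Int.le.dest hij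
  have hray := dist_ray_eq_add hT (v := f i) (r := fun k : ℕ => f (i + k))
    (fun k => by simpa [add_assoc] using hadj (i + k))
    (fun k => by simpa [add_assoc] using hne (i + k))
    (by simpa using dist_eq_one_iff_adj.2 (hadj i)) k
  simpa using hray

/-- The nearest-point projection onto the line `f`, recorded as a parameter in `ℤ`. -/
noncomputable def lineProj (T : SimpleGraph V) (f : ℤ → V) (v : V) : ℤ :=
  Function.argmin fun t => T.dist v (f t)

theorem dist_lineProj_le (T : SimpleGraph V) (f : ℤ → V) (v : V) (t : ℤ) :
    T.dist v (f (lineProj T f v)) ≤ T.dist v (f t) :=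
  Function.argmin_le (fun t => T.dist v (f t)) t

theorem lineProj_eq_of_forall_dist_eq {m : ℕ} {p : ℤ}
    (h : ∀ t, T.dist v (f t) = m + (t - p).natAbs) : lineProj T f v = p := by
  have hmin := dist_lineProj_le T f v p
  rw [h, h] at hmin
  omega

namespace IsGeodesicLine

theorem adj (hf : IsGeodesicLine T f) {i j : ℤ} (hij : (i - j).natAbs = 1) :
    T.Adj (f i) (f j) :=
  dist_eq_one_iff_adj.1 ((hf i j).trans hij)

theorem injective (hf : IsGeodesicLine T f) : Function.Injective f := by
  intro i j hij
  have h := hf i j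
  rw [hij, T.dist_self] at h
  omega

theorem dist_eq_dist_lineProj_add (hT : T.IsTree) (hf : IsGeodesicLine T f) (v : V) (t : ℤ) :
    T.dist v (f t) = T.dist v (f (lineProj T f v)) + (t - lineProj T f v).natAbs := by
  have hmin := dist_lineProj_le T f v
  set p := lineProj T f v
  have hray (ε : ℤ) (hε : ε.natAbs = 1) (k : ℕ) :
      T.dist v (f (p + ε * k)) = T.dist v (f p) + k := by
    have hadj (k : ℕ) : T.Adj (f (p + ε * k)) (f (p + ε * (k + 1 : ℕ))) :=
      hf.adj (by push_cast; rw [mul_add]; omega)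
    have hne (k : ℕ) : f (p + ε * k) ≠ f (p + ε * (k + 2 : ℕ)) :=
      hf.injective.ne (by push_cast; rw [mul_add]; omega)
    have hfirst : T.dist v (f (p + ε * 1)) = T.dist v (f p) + 1 := by
      have hmin := hmin (p + ε * 1)
      have hadj_dist := hT.dist_eq_dist_add_one_of_adj v (hadj 0)
      simp only [Nat.cast_zero, zero_add, Nat.cast_one, mul_zero, add_zero] at hadj_dist
      omega
    simpa using dist_ray_eq_add hT (v := v) (r := fun k : ℕ => f (p + ε * k)) hadj hne
      (by simpa using hfirst) k
  obtain ht | ht := le_total p t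
  · convert hray 1 rfl (t - p).natAbs using 4
    omega
  · convert hray (-1) rfl (t - p).natAbs using 4
    omega

theorem dist_eq_of_lineProj_ne (hT : T.IsTree) (hf : IsGeodesicLine T f)
    (h : lineProj T f v ≠ lineProj T f w) :
    T.dist v w = T.dist v (f (lineProj T f v)) + T.dist (f (lineProj T f v)) w := by
  obtain ⟨j, hjv, hjw⟩ : ∃ j, (lineProj T f v - j).natAbs = 1 ∧
      (lineProj T f v - lineProj T f w).natAbs = (j - lineProj T f w).natAbs + 1 := by
    obtain h | h := lt_or_gt_of_ne h
    · exact ⟨lineProj T f v + 1, by omega⟩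
    · exact ⟨lineProj T f v - 1, by omega⟩
  have hv := hf.dist_eq_dist_lineProj_add hT v j
  have hw := hf.dist_eq_dist_lineProj_add hT w j
  have hwp := hf.dist_eq_dist_lineProj_add hT w (lineProj T f v)
  exact dist_eq_dist_add_dist_of_adj hT (hf.adj hjv) (by omega) (by omega)

theorem mem_range_of_dist_eq (hT : T.IsTree) (hf : IsGeodesicLine T f) {i j : ℤ}
    (hx : T.dist (f i) (f j) = T.dist (f i) x + T.dist x (f j)) : x ∈ Set.range f := by
  have hi := hf.dist_eq_dist_lineProj_add hT x i
  have hj := hf.dist_eq_dist_lineProj_add hT x j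
  rw [hf, T.dist_comm (u := f i)] at hx
  exact ⟨lineProj T f x, (hT.connected.dist_eq_zero_iff.1 (by omega)).symm⟩

theorem lineProj_mem_range_or (hT : T.IsTree) (hf : IsGeodesicLine T f)
    (hg : IsGeodesicLine T g) (v : V) :
    (∃ t, lineProj T f (g t) = lineProj T f v) ∨ ∃ t, lineProj T g (f t) = lineProj T g v := by
  refine or_iff_not_imp_left.2 fun hv => ⟨lineProj T f v, Eq.symm ?_⟩
  push Not at hv
  set x := f (lineProj T f v)
  refine lineProj_eq_of_forall_dist_eq (m := T.dist v x + T.dist x (g (lineProj T g x)))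
    fun t => ?_
  rw [hf.dist_eq_of_lineProj_ne hT (hv t).symm, hg.dist_eq_dist_lineProj_add hT x t, add_assoc]

end IsGeodesicLine

theorem dist_le_setDiam {S : Set V} (hv : v ∈ S) (hw : w ∈ S) :
    (T.dist v w : ℕ∞) ≤ setDiam T S :=
  le_iSup₂_of_le v hv (le_iSup₂_of_le w hw le_rfl)

theorem setDiam_mono {S S' : Set V} (h : S ⊆ S') : setDiam T S ≤ setDiam T S' :=
  iSup₂_le fun _ hv => iSup₂_le fun _ hw => dist_le_setDiam (h hv) (h hw)

theorem IsGeodesicLine.natAbs_lineProj_sub_le_setDiam (hT : T.IsTree) (hf : IsGeodesicLine T f)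
    (hg : IsGeodesicLine T g) (i j : ℤ) :
    ((lineProj T f (g i) - lineProj T f (g j)).natAbs : ℕ∞) ≤
      setDiam T (Set.range f ∩ Set.range g) := by
  by_cases h : lineProj T f (g i) = lineProj T f (g j)
  · simp [h]
  have hi : f (lineProj T f (g i)) ∈ Set.range g :=
    hg.mem_range_of_dist_eq hT (hf.dist_eq_of_lineProj_ne hT h)
  have hj : f (lineProj T f (g j)) ∈ Set.range g :=
    hg.mem_range_of_dist_eq hT (hf.dist_eq_of_lineProj_ne hT (Ne.symm h))
  rw [← hf]
  exact dist_le_setDiam ⟨⟨_, rfl⟩, hi⟩ ⟨⟨_, rfl⟩, hj⟩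

end Tree

section Axis

variable {G V : Type*} [Group G] [MulAction G V] {T : SimpleGraph V} {a h : G} {f : ℤ → V} {k : ℤ}

theorem ActsByAut.edist_smul_le (hAct : ActsByAut G T) (a : G) (v w : V) :
    T.edist (a • v) (a • w) ≤ T.edist v w := by
  let φ : T →g T := ⟨(a • ·), hAct a _ _⟩
  exact le_iInf fun p => (edist_le (p.map φ)).trans_eq (by rw [Walk.length_map])

theorem ActsByAut.dist_smul (hAct : ActsByAut G T) (a : G) (v w : V) :
    T.dist (a • v) (a • w) = T.dist v w :=
  congrArg ENat.toNat <| (hAct.edist_smul_le a v w).antisymm <| by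
    simpa using hAct.edist_smul_le a⁻¹ (a • v) (a • w)

theorem pow_smul_eq_add_mul (hfa : ∀ t, a • f t = f (t + k)) (n : ℕ) (t : ℤ) :
    a ^ n • f t = f (t + n * k) := by
  induction n with
  | zero => simp
  | succ n ih =>
    rw [pow_succ', mul_smul, ih, hfa]
    congr 1
    push_cast
    ring

theorem lineProj_smul (hT : T.IsTree) (hAct : ActsByAut G T) (hf : IsGeodesicLine T f)
    (hfa : ∀ t, a • f t = f (t + k)) (v : V) : lineProj T f (a • v) = lineProj T f v + k := by
  refine lineProj_eq_of_forall_dist_eq (m := T.dist v (f (lineProj T f v))) fun t => ?_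
  have ht : f t = a • f (t - k) := by rw [hfa, sub_add_cancel]
  rw [ht, hAct.dist_smul, hf.dist_eq_dist_lineProj_add hT, sub_sub, add_comm k]

theorem transLen_le_dist (T : SimpleGraph V) (h : G) (v : V) : transLen T h ≤ T.dist v (h • v) :=
  ciInf_le' _ v

theorem exists_dist_eq_transLen [Nonempty V] (T : SimpleGraph V) (h : G) :
    ∃ v : V, T.dist v (h • v) = transLen T h :=
  Nat.sInf_mem (Set.range_nonempty fun v : V => T.dist v (h • v))

theorem range_subset_axis (hf : IsGeodesicLine T f)
    (hfh : ∀ t, h • f t = f (t + transLen T h)) : Set.range f ⊆ Axis T h := by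
  rintro _ ⟨t, rfl⟩
  have hdist : T.dist (f t) (h • f t) = transLen T h := by rw [hfh, hf]; omega
  exact hdist

/-- The concatenation of the translates `h ^ q • p`, `q ∈ ℤ`, of a walk `p` from `v` to `h • v`. -/
def concatTranslates {v : V} (p : T.Walk v (h • v)) (t : ℤ) : V :=
  h ^ (t / p.length) • p.getVert (t % p.length).toNat

variable {v : V} {p : T.Walk v (h • v)}

theorem concatTranslates_add_mul (hp : 0 < p.length) {r : ℕ} (hr : r ≤ p.length) (q : ℤ) :
    concatTranslates p (r + p.length * q) = h ^ q • p.getVert r := by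
  have hp' : (0 : ℤ) < p.length := by exact_mod_cast hp
  unfold concatTranslates
  rw [Int.add_mul_ediv_left _ _ hp'.ne', Int.add_mul_emod_self_left]
  obtain hr | rfl := hr.lt_or_eq
  · rw [Int.ediv_eq_zero_of_lt (by omega) (by omega), Int.emod_eq_of_lt (by omega) (by omega),
      zero_add, Int.toNat_natCast]
  · rw [Int.ediv_self hp'.ne', Int.emod_self, Int.toNat_zero, Walk.getVert_zero,
      Walk.getVert_length, add_comm, zpow_add_one, mul_smul]

theorem smul_concatTranslates (hp : 0 < p.length) (t : ℤ) :
    h • concatTranslates p t = concatTranslates p (t + p.length) := by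
  have hp' : (p.length : ℤ) ≠ 0 := by exact_mod_cast hp.ne'
  unfold concatTranslates
  rw [Int.add_ediv_of_dvd_right dvd_rfl, Int.ediv_self hp', Int.add_emod_right, add_comm,
    zpow_one_add, mul_smul]

theorem adj_concatTranslates (hAct : ActsByAut G T) (hp : 0 < p.length) (t : ℤ) :
    T.Adj (concatTranslates p t) (concatTranslates p (t + 1)) := by
  have hp' : (0 : ℤ) < p.length := by exact_mod_cast hp
  obtain ⟨r, hr⟩ := Int.eq_ofNat_of_zero_le (Int.emod_nonneg t hp'.ne')
  have hlt : r < p.length := by have := Int.emod_lt_of_pos t hp'; omega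
  have ht : t = r + p.length * (t / p.length) := by rw [← hr, Int.emod_add_mul_ediv]
  have ht' : t + 1 = (r + 1 : ℕ) + p.length * (t / p.length) := by push_cast; omega
  have hft := concatTranslates_add_mul hp hlt.le (t / p.length)
  have hft' := concatTranslates_add_mul hp (Nat.succ_le_of_lt hlt) (t / p.length)
  rw [← ht] at hft
  rw [← ht'] at hft'
  rw [hft, hft']
  exact hAct _ _ _ (p.adj_getVert_succ hlt)

theorem dist_le_of_forall_adj (hadj : ∀ t, T.Adj (f t) (f (t + 1))) (i : ℤ) (n : ℕ) :
    T.dist (f i) (f (i + n)) ≤ n := by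
  obtain ⟨p, hp⟩ : ∃ p : T.Walk (f i) (f (i + n)), p.length = n := by
    induction n with
    | zero => exact ⟨Walk.nil.copy rfl (by simp), by simp⟩
    | succ n ih =>
      obtain ⟨p, hp⟩ := ih
      exact ⟨(p.concat (hadj (i + n))).copy rfl (by push_cast; rw [add_assoc]), by simp [hp]⟩
  exact (dist_le p).trans_eq hp

theorem ne_add_two_of_smul_eq_add_transLen (hNoInv : NoEdgeInversion G T)
    (hadj : ∀ t, T.Adj (f t) (f (t + 1))) (hpos : 0 < transLen T h)
    (hfh : ∀ t, h • f t = f (t + transLen T h)) (t : ℤ) : f t ≠ f (t + 2) := by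
  intro ht
  obtain hτ | hτ : transLen T h = 1 ∨ 2 ≤ transLen T h := by omega
  · rw [hτ] at hfh
    exact hNoInv h _ _ (hadj t) ⟨hfh t, by rw [hfh, ht, add_assoc]; rfl⟩
  · have hshort := dist_le_of_forall_adj hadj (t + 2) (transLen T h - 2)
    rw [← ht, show t + 2 + ((transLen T h - 2 : ℕ) : ℤ) = t + transLen T h by omega,
      ← hfh] at hshort
    have hmin := transLen_le_dist T h (f t)
    omega

theorem IsHyperbolic.exists_isGeodesicLine (hh : IsHyperbolic V h) (hT : T.IsTree)
    (hAct : ActsByAut G T) (hNoInv : NoEdgeInversion G T) :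
    ∃ f, IsGeodesicLine T f ∧ ∀ t, h • f t = f (t + transLen T h) := by
  have := hT.connected.nonempty
  obtain ⟨v, hv⟩ := exists_dist_eq_transLen T h
  obtain ⟨p, hp⟩ := hT.connected.exists_walk_length_eq_dist v (h • v)
  have hpos : 0 < p.length := by
    rw [hp]
    exact hT.connected.pos_dist_of_ne fun hfix => hh ⟨v, hfix.symm⟩
  have hadj := adj_concatTranslates hAct hpos
  have hsmul := smul_concatTranslates hpos
  rw [hp.trans hv] at hpos hsmul
  exact ⟨concatTranslates p, isGeodesicLine_of_adj_of_ne hT hadj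
    (ne_add_two_of_smul_eq_add_transLen hNoInv hadj hpos hsmul), hsmul⟩

end Axis

section PingPong

/-- `FreeGroup.injective_lift_of_ping_pong` asks for `ι` and `G` in the same universe, which rules
out `ι = Bool` for a general `G`. -/
theorem freeGroup_lift_injective_of_pingPong.{u, v, w} {ι : Type u} [Nontrivial ι] {G : Type v}
    [Group G] {α : Type w} [MulAction G α] (a : ι → G) (X Y : ι → Set α)
    (hXn : ∀ i, (X i).Nonempty) (hX : Pairwise (Function.onFun Disjoint X))
    (hY : Pairwise (Function.onFun Disjoint Y)) (hXY : ∀ i j, Disjoint (X i) (Y j))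
    (haX : ∀ i, a i • (Y i)ᶜ ⊆ X i) (haY : ∀ i, (a i)⁻¹ • (X i)ᶜ ⊆ Y i) :
    Function.Injective (FreeGroup.lift a) := by
  let a' : ULift.{v} ι → ULift.{u} G := fun i => ULift.up (a i.down)
  have hinj : Function.Injective (FreeGroup.lift a') :=
    FreeGroup.injective_lift_of_ping_pong a' (fun i => X i.down) (fun i => Y i.down)
      (fun i => hXn i.down) (fun _ _ hij => hX (ULift.down_injective.ne hij))
      (fun _ _ hij => hY (ULift.down_injective.ne hij)) (fun i j => hXY i.down j.down)
      (fun i => haX i.down) (fun i => haY i.down)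
  have hlift : FreeGroup.lift a = MulEquiv.ulift.toMonoidHom.comp
      ((FreeGroup.lift a').comp (FreeGroup.freeGroupCongr Equiv.ulift.symm).toMonoidHom) := by
    ext i
    rfl
  rw [hlift]
  exact MulEquiv.ulift.injective.comp (hinj.comp (MulEquiv.injective _))

theorem freeGroup_lift_injective_of_shift {ι G α : Type*} [Nontrivial ι] [Group G] [MulAction G α]
    {a : ι → G} {s : ι → α → ℤ} {k : ι → ℤ} {S : ι → Set ℤ}
    (hshift : ∀ i x, s i (a i • x) = s i x + k i)
    (hS : ∀ i, ∃ x, s i x ∈ S i) (hSk : ∀ i, ∀ p ∈ S i, ∀ q ∈ S i, p - q < k i)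
    (hcover : ∀ i j, i ≠ j → ∀ x, s i x ∈ S i ∨ s j x ∈ S j) :
    Function.Injective (FreeGroup.lift a) := by
  let X (i : ι) : Set α := {x | ∀ p ∈ S i, p < s i x}
  let Y (i : ι) : Set α := {x | ∀ p ∈ S i, s i x < p}
  have hX (i : ι) {x : α} (hx : x ∈ X i) : s i x ∉ S i := fun h => (hx _ h).false
  have hY (i : ι) {x : α} (hx : x ∈ Y i) : s i x ∉ S i := fun h => (hx _ h).false
  have hdisj {i j : ι} (hij : i ≠ j) {x : α} (hi : s i x ∉ S i) (hj : s j x ∉ S j) : False :=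
    (hcover i j hij x).elim hi hj
  refine freeGroup_lift_injective_of_pingPong a X Y (fun i => ?_)
    (fun i j hij => Set.disjoint_left.2 fun x hi hj => hdisj hij (hX i hi) (hX j hj))
    (fun i j hij => Set.disjoint_left.2 fun x hi hj => hdisj hij (hY i hi) (hY j hj))
    (fun i j => Set.disjoint_left.2 fun x hi hj => ?_) (fun i => ?_) (fun i => ?_)
  · obtain ⟨x, hx⟩ := hS i
    refine ⟨a i • x, fun p hp => ?_⟩
    have := hSk i p hp _ hx
    rw [hshift]
    omega
  · obtain rfl | hij := eq_or_ne i j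
    · obtain ⟨y, hy⟩ := hS i
      exact lt_asymm (hi _ hy) (hj _ hy)
    · exact hdisj hij (hX i hi) (hY j hj)
  · rintro _ ⟨x, hx, rfl⟩ p hp
    obtain ⟨q, hq, hqx⟩ : ∃ q ∈ S i, q ≤ s i x := by simpa [Y] using hx
    have hpq := hSk i p hp q hq
    change p < s i (a i • x)
    rw [hshift]
    omega
  · rintro _ ⟨x, hx, rfl⟩ p hp
    obtain ⟨q, hq, hqx⟩ : ∃ q ∈ S i, s i x ≤ q := by simpa [X] using hx
    have hqp := hSk i q hq p hp
    have hinv := hshift i ((a i)⁻¹ • x)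
    rw [smul_inv_smul] at hinv
    change s i ((a i)⁻¹ • x) < p
    omega

variable {G V : Type*} [Group G] [MulAction G V] {T : SimpleGraph V}

theorem freeGroup_lift_injective_of_translates {ι : Type*} [Nontrivial ι] (hT : T.IsTree)
    (hAct : ActsByAut G T) {a : ι → G} {f : ι → ℤ → V} {k : ι → ℤ}
    (hf : ∀ i, IsGeodesicLine T (f i)) (hfa : ∀ i t, a i • f i t = f i (t + k i))
    (hproj : ∀ i j j', j ≠ i → j' ≠ i → ∀ t t',
      lineProj T (f i) (f j t) - lineProj T (f i) (f j' t') < k i) :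
    Function.Injective (FreeGroup.lift a) := by
  refine freeGroup_lift_injective_of_shift (s := fun i => lineProj T (f i))
    (S := fun i => {p | ∃ j ≠ i, ∃ t, lineProj T (f i) (f j t) = p})
    (fun i => lineProj_smul hT hAct (hf i) (hfa i)) (fun i => ?_) ?_ (fun i j hij x => ?_)
  · obtain ⟨j, hj⟩ := exists_ne i
    exact ⟨f j 0, j, hj, 0, rfl⟩
  · rintro i _ ⟨j, hj, t, rfl⟩ _ ⟨j', hj', t', rfl⟩
    exact hproj i j j' hj hj' t t'
  · exact ((hf i).lineProj_mem_range_or hT (hf j) x).imp (⟨j, hij.symm, ·⟩) (⟨i, hij, ·⟩)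

theorem freelyGeneratesFreeSubgroup_of_translates (hT : T.IsTree) (hAct : ActsByAut G T) {a b : G}
    {f g : ℤ → V} {k l : ℕ} (hf : IsGeodesicLine T f) (hg : IsGeodesicLine T g)
    (hfa : ∀ t, a • f t = f (t + k)) (hgb : ∀ t, b • g t = g (t + l))
    (hdiam : setDiam T (Set.range f ∩ Set.range g) < (min k l : ℕ)) :
    FreelyGeneratesFreeSubgroup a b := by
  have hproj_f (t t' : ℤ) : lineProj T f (g t) - lineProj T f (g t') < k := by
    have := (hf.natAbs_lineProj_sub_le_setDiam hT hg t t').trans_lt hdiam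
    rw [Nat.cast_lt] at this
    omega
  have hproj_g (t t' : ℤ) : lineProj T g (f t) - lineProj T g (f t') < l := by
    have := (hg.natAbs_lineProj_sub_le_setDiam hT hf t t').trans_lt (Set.inter_comm _ _ ▸ hdiam)
    rw [Nat.cast_lt] at this
    omega
  refine freeGroup_lift_injective_of_translates hT hAct (f := fun i : Bool => if i then f else g)
    (k := fun i : Bool => if i then k else l) ?_ ?_ ?_
  · rintro (_ | _) <;> assumption
  · rintro (_ | _) <;> assumption
  · rintro (_ | _) (_ | _) (_ | _) hj hj' <;> first | contradiction | assumption

end PingPong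

/-- If `G` acts without edge inversions on a simplicial tree, `h1, h2` are
hyperbolic, `n ≥ 1` and `diam(Axis(h1) ∩ Axis(h2)) < n · min{τ(h1), τ(h2)}`, then `h1^n`
and `h2^n` freely generate a rank 2 free subgroup of `G`. -/
theorem statement7 {G V : Type*} [Group G] [MulAction G V] (T : SimpleGraph V)
    (hT : T.IsTree) (hAct : ActsByAut G T) (hNoInv : NoEdgeInversion G T)
    (h1 h2 : G) (hh1 : IsHyperbolic V h1) (hh2 : IsHyperbolic V h2)
    (n : ℕ) (hn : 1 ≤ n)
    (hdiam : setDiam T (Axis T h1 ∩ Axis T h2) <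
      ((n * min (transLen T h1) (transLen T h2) : ℕ) : ℕ∞)) :
    FreelyGeneratesFreeSubgroup (h1 ^ n) (h2 ^ n) := by
  obtain ⟨f, hf, hfh⟩ := hh1.exists_isGeodesicLine hT hAct hNoInv
  obtain ⟨g, hg, hgh⟩ := hh2.exists_isGeodesicLine hT hAct hNoInv
  have hoverlap : setDiam T (Set.range f ∩ Set.range g) <
      (min (n * transLen T h1) (n * transLen T h2) : ℕ) := by
    rw [Nat.mul_min_mul_left]
    exact (setDiam_mono (Set.inter_subset_inter (range_subset_axis hf hfh)
      (range_subset_axis hg hgh))).trans_lt hdiam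
  refine freelyGeneratesFreeSubgroup_of_translates hT hAct hf hg ?_ ?_ hoverlap
  · exact_mod_cast pow_smul_eq_add_mul hfh n
  · exact_mod_cast pow_smul_eq_add_mul hgh n
end

section
/- Let F2 be the free group on two generators x1, x2 and let ℓ1, ℓ2 be positive real numbers. For w ∈ F2 define the weighted word length |w|_ℓ as the minimum, over all finite words in the letters x1^{±1}, x2^{±1} representing w, of the total weight, where each occurrence of x1^{±1} contributes ℓ1 and each occurrence of x2^{±1} contributes ℓ2; let d_ℓ(u,v) = |u^{−1}·v|_ℓ be the associated left-invariant distance. Then the entropy E = Ent(F2, d_ℓ) is a finite positive real number and satisfies the equation (e^{E·ℓ1} − 1)·(e^{E·ℓ2} − 1) = 4. -/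
/-- The weight of a word (a list of letters `x1^{±1}, x2^{±1}`, encoded as
`List (Bool × Bool)` where the first component selects the generator — `true` for `x1`,
`false` for `x2`): each occurrence of `x1^{±1}` contributes `ℓ1` and each occurrence of
`x2^{±1}` contributes `ℓ2`. -/
noncomputable def wordWeight (ℓ1 ℓ2 : ℝ) (L : List (Bool × Bool)) : ℝ :=
  (L.map (fun p => if p.1 then ℓ1 else ℓ2)).sum

/-- The weighted word length of `w` in the free group on two generators: the infimum
(minimum) of the total weight over all words representing `w`. -/
noncomputable def weightedLength (ℓ1 ℓ2 : ℝ) (w : FreeGroup Bool) : ℝ :=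
  sInf {t : ℝ | ∃ L : List (Bool × Bool), FreeGroup.mk L = w ∧ t = wordWeight ℓ1 ℓ2 L}

/-- The entropy of the free group on two generators with respect to the left-invariant
distance `d_ℓ(u,v) = |u⁻¹v|_ℓ`: the exponential growth rate of the cardinality of balls
around the identity. -/
noncomputable def weightedEntropy (ℓ1 ℓ2 : ℝ) : ℝ :=
  Filter.limsup
    (fun R : ℝ => R⁻¹ * Real.log (Nat.card {w : FreeGroup Bool | weightedLength ℓ1 ℓ2 w ≤ R}))
    Filter.atTop

/-!
Elements of the free group are reduced words. In a reduced word a letter `p` may be followed by any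
letter except its inverse, so the number `N p R` of words of weight at most `R` that may follow `p`
satisfies the renewal equation `N p R = 1 + ∑ q, N q (R - w q)` for `0 ≤ R`, the sum running over
the successors `q` of `p`. If `U` is a positive vector with `U p = ∑ q, exp (-E * w q) * U q`, then
`U p * exp (E * R)` solves the corresponding homogeneous equation. Two affine rescalings of `N`
compare with it: `N + 1` is a subsolution as soon as every letter has two successors, and
`D * N + 1` is a supersolution, where `D` is the number of letters. Both equal `1` for `R < 0`, so
they are bounded by multiples of `U p * exp (E * R)` from above and from below respectively, and `N`
grows like `exp (E * R)`.

For reduced words such a `U` is explicit. Give the words starting with `a` or with `a⁻¹` the mass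
`h a = 1 / (exp (E * ℓ a) + 1)` each; if these masses add up to `1` then `U = 1 - h` works. The
condition `∑ a, 2 * h a = 1` on `E` has a positive solution by the intermediate value theorem, and
for two generators it reads `(exp (E * ℓ1) - 1) * (exp (E * ℓ2) - 1) = 4`.
-/

open Asymptotics Filter Set Topology

theorem tendsto_inv_mul_log_of_isTheta_exp {f : ℝ → ℝ} {E : ℝ}
    (hf : f =Θ[atTop] fun R => Real.exp (E * R)) :
    Tendsto (fun R => R⁻¹ * Real.log (f R)) atTop (𝓝 E) := by
  have hne : ∀ᶠ R in atTop, f R ≠ 0 :=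
    hf.eq_zero_iff.mono fun R hR h0 => (Real.exp_pos _).ne' (hR.1 h0)
  have hexp : (fun R => Real.exp (Real.log (f R))) =Θ[atTop] fun R => Real.exp (E * R) :=
    (IsTheta.of_norm_eventuallyEq_norm (hne.mono fun R hR => by
      simp only [Real.exp_log_eq_abs hR, Real.norm_eq_abs, abs_abs])).trans hf
  have hbdd := Real.isTheta_exp_comp_exp_comp.1 hexp
  have hlim := (tendsto_inv_atTop_zero.zero_mul_isBoundedUnder_le hbdd).add_const E
  rw [zero_add] at hlim
  refine hlim.congr' ?_
  filter_upwards [eventually_ne_atTop 0] with R hR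
  field_simp
  ring

theorem exists_forall_mul_exp_le {A : Type*} [Finite A] (U : A → ℝ) (E a b : ℝ) :
    ∃ C > 0, ∀ p, ∀ R ∈ Icc a b, U p * Real.exp (E * R) ≤ C := by
  have hcompact : IsCompact (⋃ p, (fun R => U p * Real.exp (E * R)) '' Icc a b) :=
    isCompact_iUnion fun p => isCompact_Icc.image (by fun_prop)
  obtain ⟨C, hC⟩ := hcompact.bddAbove
  exact ⟨max C 1, by positivity, fun p R hR =>
    (hC (mem_iUnion_of_mem p (mem_image_of_mem _ hR))).trans (le_max_left _ _)⟩

theorem exists_pos_forall_mem_Icc {A : Type*} [Finite A] {w : A → ℝ} (hw : ∀ q, 0 < w q) :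
    ∃ m > 0, ∃ M, ∀ q, w q ∈ Icc m M := by
  obtain hempty | hnonempty := isEmpty_or_nonempty A
  · exact ⟨1, one_pos, 1, isEmptyElim⟩
  · obtain ⟨p, hp⟩ := Finite.exists_min w
    obtain ⟨q, hq⟩ := Finite.exists_max w
    exact ⟨w p, hw p, w q, fun r => ⟨hp r, hq r⟩⟩

section Renewal

variable {A : Type*} {S : A → Finset A} {w : A → ℝ} {m M : ℝ}

theorem le_of_renewal {f g : A → ℝ → ℝ} (hm : 0 < m) (hw : ∀ q, w q ∈ Icc m M)
    (hbase : ∀ p, ∀ R ∈ Ico (-M) 0, f p R ≤ g p R)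
    (hf : ∀ p R, 0 ≤ R → f p R ≤ ∑ q ∈ S p, f q (R - w q))
    (hg : ∀ p R, 0 ≤ R → ∑ q ∈ S p, g q (R - w q) ≤ g p R)
    (p : A) {R : ℝ} (hR : -M ≤ R) : f p R ≤ g p R := by
  have below_multiple (n : ℕ) : ∀ p, ∀ R ∈ Ico (-M) (n * m), f p R ≤ g p R := by
    induction n with
    | zero => simpa using hbase
    | succ n ih =>
      rintro p R ⟨hRM, hRn⟩
      obtain hneg | hnonneg := lt_or_ge R 0
      · exact hbase p R ⟨hRM, hneg⟩
      · refine (hf p R hnonneg).trans (le_trans (Finset.sum_le_sum fun q _ => ?_) (hg p R hnonneg))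
        have hmq := (hw q).1
        have hMq := (hw q).2
        push_cast at hRn
        exact ih q _ ⟨by linarith, by linarith⟩
  obtain ⟨n, hn⟩ := exists_nat_gt (R / m)
  exact below_multiple n p R ⟨hR, (div_lt_iff₀ hm).1 hn⟩

end Renewal

section AdmissibleWords

variable {A : Type*}

/-- The words in the alphabet `A` of weight at most `R` whose first letter, if any, lies in `T`
and in which each letter `p` is followed by a letter of `S p`. -/
def admissibleWords (S : A → Finset A) (w : A → ℝ) (T : Finset A) (R : ℝ) : Set (List A) :=
  {L | (∀ q ∈ L.head?, q ∈ T) ∧ L.IsChain (fun p q => q ∈ S p) ∧ (L.map w).sum ≤ R}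

/-- `U` is a positive eigenvector, for the eigenvalue `1`, of the transfer matrix with entry
`exp (-(E * w q))` at `(p, q)` when `q ∈ S p` and `0` otherwise. If every letter has at least two
successors, its existence identifies `E` as the growth rate of the admissible words. -/
structure IsPerronVector (S : A → Finset A) (w : A → ℝ) (E : ℝ) (U : A → ℝ) : Prop where
  pos : ∀ p, 0 < U p
  eq_sum : ∀ p, U p = ∑ q ∈ S p, Real.exp (-(E * w q)) * U q

variable {S : A → Finset A} {w : A → ℝ} {T : Finset A} {R m M E : ℝ} {U : A → ℝ}

theorem admissibleWords_eq_empty (hw : ∀ q, 0 ≤ w q) (hR : R < 0) :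
    admissibleWords S w T R = ∅ := by
  refine eq_empty_of_forall_notMem fun L ⟨_, _, hL⟩ => (hL.trans_lt hR).not_ge ?_
  exact List.sum_nonneg (List.forall_mem_map.2 fun q _ => hw q)

theorem admissibleWords_eq_insert (hR : 0 ≤ R) :
    admissibleWords S w T R =
      insert [] (⋃ q ∈ (T : Set A), List.cons q '' admissibleWords S w (S q) (R - w q)) := by
  ext L
  cases L with
  | nil => simp [admissibleWords, hR]
  | cons q L =>
    simp [admissibleWords, List.isChain_cons, le_sub_iff_add_le', and_assoc, and_left_comm,
      and_comm]

theorem finite_admissibleWords [Finite A] (hm : 0 < m) (hw : ∀ q, m ≤ w q) :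
    (admissibleWords S w T R).Finite := by
  refine (List.finite_length_le A ⌊R / m⌋₊).subset fun L ⟨_, _, hL⟩ => Nat.le_floor ?_
  rw [le_div_iff₀ hm]
  have hlength := (L.map w).card_nsmul_le_sum m (List.forall_mem_map.2 fun q _ => hw q)
  rw [List.length_map, nsmul_eq_mul] at hlength
  exact hlength.trans hL

theorem ncard_admissibleWords [Finite A] (hm : 0 < m) (hw : ∀ q, m ≤ w q) (hR : 0 ≤ R) :
    (admissibleWords S w T R).ncard =
      ∑ q ∈ T, (admissibleWords S w (S q) (R - w q)).ncard + 1 := by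
  have hfin (q : A) : (List.cons q '' admissibleWords S w (S q) (R - w q)).Finite :=
    (finite_admissibleWords hm hw).image _
  have hdisj : (T : Set A).PairwiseDisjoint
      fun q => List.cons q '' admissibleWords S w (S q) (R - w q) := by
    intro p _ q _ hpq
    refine disjoint_left.2 ?_
    rintro _ ⟨L, _, rfl⟩ ⟨L', _, h⟩
    exact hpq (List.cons.inj h).1.symm
  rw [admissibleWords_eq_insert hR,
    ncard_insert_of_notMem (by simp) (T.finite_toSet.biUnion fun q _ => hfin q),
    T.finite_toSet.ncard_biUnion (fun q _ => hfin q) hdisj, finsum_mem_coe_finset]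
  simp only [ncard_image_of_injective _ List.cons_injective]

theorem ncard_admissibleWords_add_one_le [Finite A] (hm : 0 < m) (hw : ∀ q, m ≤ w q)
    (hT : T.Nontrivial) (hR : 0 ≤ R) :
    ((admissibleWords S w T R).ncard : ℝ) + 1 ≤
      ∑ q ∈ T, (((admissibleWords S w (S q) (R - w q)).ncard : ℝ) + 1) := by
  have hcard : 2 ≤ T.card := Finset.one_lt_card_iff_nontrivial.2 hT
  rw [ncard_admissibleWords hm hw hR]
  norm_cast
  rw [Finset.sum_add_distrib, Finset.sum_const, smul_eq_mul]
  omega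

theorem sum_card_mul_ncard_admissibleWords_add_one_le [Fintype A] (hm : 0 < m)
    (hw : ∀ q, m ≤ w q) (hR : 0 ≤ R) :
    ∑ q ∈ T, ((Fintype.card A : ℝ) * (admissibleWords S w (S q) (R - w q)).ncard + 1) ≤
      Fintype.card A * (admissibleWords S w T R).ncard + 1 := by
  rw [ncard_admissibleWords hm hw hR]
  norm_cast
  rw [Finset.sum_add_distrib, ← Finset.mul_sum, Finset.sum_const, smul_eq_mul, mul_add]
  have hcard := T.card_le_univ
  omega

theorem sum_mul_exp_sub (T : Finset A) (U w : A → ℝ) (E R : ℝ) :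
    ∑ q ∈ T, U q * Real.exp (E * (R - w q)) =
      (∑ q ∈ T, Real.exp (-(E * w q)) * U q) * Real.exp (E * R) := by
  rw [Finset.sum_mul]
  refine Finset.sum_congr rfl fun q _ => ?_
  rw [mul_sub, sub_eq_neg_add, Real.exp_add]
  ring

namespace IsPerronVector

theorem mul_exp_eq_sum (hU : IsPerronVector S w E U) (p : A) (R : ℝ) :
    U p * Real.exp (E * R) = ∑ q ∈ S p, U q * Real.exp (E * (R - w q)) := by
  rw [sum_mul_exp_sub, ← hU.eq_sum]

theorem exists_ncard_add_one_le [Finite A] (hU : IsPerronVector S w E U)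
    (hS : ∀ p, (S p).Nontrivial) (hm : 0 < m) (hw : ∀ q, w q ∈ Icc m M) :
    ∃ C > 0, ∀ p R, -M ≤ R →
      ((admissibleWords S w (S p) R).ncard : ℝ) + 1 ≤ C * (U p * Real.exp (E * R)) := by
  obtain ⟨C, hC, hbound⟩ := exists_forall_mul_exp_le (fun p => (U p)⁻¹) (-E) (-M) 0
  refine ⟨C, hC, fun p R hR => le_of_renewal (S := S)
    (f := fun p R => ((admissibleWords S w (S p) R).ncard : ℝ) + 1)
    (g := fun p R => C * (U p * Real.exp (E * R))) hm hw (fun p R hR => ?_)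
    (fun p R => ncard_admissibleWords_add_one_le hm (fun q => (hw q).1) (hS p))
    (fun p R _ => ?_) p hR⟩
  · have hpos := mul_pos (hU.pos p) (Real.exp_pos (E * R))
    have hinv := hbound p R ⟨hR.1, hR.2.le⟩
    rw [neg_mul, Real.exp_neg, ← mul_inv, inv_le_iff_one_le_mul₀ hpos] at hinv
    simpa only [admissibleWords_eq_empty (fun q => hm.le.trans (hw q).1) hR.2, ncard_empty,
      Nat.cast_zero, zero_add] using hinv
  · rw [hU.mul_exp_eq_sum p R, Finset.mul_sum]

theorem exists_le_card_mul_ncard_add_one [Fintype A] (hU : IsPerronVector S w E U)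
    (hm : 0 < m) (hw : ∀ q, w q ∈ Icc m M) :
    ∃ c > 0, ∀ p R, -M ≤ R →
      c * (U p * Real.exp (E * R)) ≤
        Fintype.card A * (admissibleWords S w (S p) R).ncard + 1 := by
  obtain ⟨C, hC, hbound⟩ := exists_forall_mul_exp_le U E (-M) 0
  refine ⟨C⁻¹, inv_pos.2 hC, fun p R hR => le_of_renewal (S := S)
    (f := fun p R => C⁻¹ * (U p * Real.exp (E * R)))
    (g := fun p R => (Fintype.card A : ℝ) * (admissibleWords S w (S p) R).ncard + 1)
    hm hw (fun p R hR => ?_) (fun p R _ => ?_)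
    (fun p R => sum_card_mul_ncard_admissibleWords_add_one_le hm fun q => (hw q).1) p hR⟩
  · rw [admissibleWords_eq_empty (fun q => hm.le.trans (hw q).1) hR.2, ncard_empty,
      Nat.cast_zero, mul_zero, zero_add]
    exact inv_mul_le_one_of_le₀ (hbound p R ⟨hR.1, hR.2.le⟩) hC.le
  · rw [hU.mul_exp_eq_sum p R, Finset.mul_sum]

theorem ncard_admissibleWords_isBigO_exp [Finite A] (hU : IsPerronVector S w E U)
    (hw : ∀ q, 0 < w q) (hS : ∀ p, (S p).Nontrivial) (hT : T.Nontrivial) :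
    (fun R => ((admissibleWords S w T R).ncard : ℝ)) =O[atTop] fun R => Real.exp (E * R) := by
  obtain ⟨m, hm, M, hmM⟩ := exists_pos_forall_mem_Icc hw
  obtain ⟨C, -, hC⟩ := hU.exists_ncard_add_one_le hS hm hmM
  refine .of_bound (C * ∑ q ∈ T, Real.exp (-(E * w q)) * U q) ?_
  filter_upwards [eventually_ge_atTop 0] with R hR
  rw [RCLike.norm_natCast, Real.norm_of_nonneg (Real.exp_nonneg _)]
  calc ((admissibleWords S w T R).ncard : ℝ)
    _ ≤ (admissibleWords S w T R).ncard + 1 := le_add_of_nonneg_right zero_le_one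
    _ ≤ ∑ q ∈ T, (((admissibleWords S w (S q) (R - w q)).ncard : ℝ) + 1) :=
      ncard_admissibleWords_add_one_le hm (fun q => (hmM q).1) hT hR
    _ ≤ ∑ q ∈ T, C * (U q * Real.exp (E * (R - w q))) :=
      Finset.sum_le_sum fun q _ => hC q _ (by linarith [(hmM q).2])
    _ = _ := by rw [← Finset.mul_sum, sum_mul_exp_sub, mul_assoc]

theorem exp_isBigO_ncard_admissibleWords [Finite A] (hU : IsPerronVector S w E U)
    (hw : ∀ q, 0 < w q) (hT : T.Nonempty) :
    (fun R => Real.exp (E * R)) =O[atTop] fun R => ((admissibleWords S w T R).ncard : ℝ) := by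
  have := Fintype.ofFinite A
  obtain ⟨m, hm, M, hmM⟩ := exists_pos_forall_mem_Icc hw
  obtain ⟨c, hc, hbound⟩ := hU.exists_le_card_mul_ncard_add_one hm hmM
  have hsum : 0 < ∑ q ∈ T, Real.exp (-(E * w q)) * U q :=
    Finset.sum_pos (fun q _ => mul_pos (Real.exp_pos _) (hU.pos q)) hT
  refine .of_bound ((Fintype.card A + 1) / (c * ∑ q ∈ T, Real.exp (-(E * w q)) * U q)) ?_
  filter_upwards [eventually_ge_atTop 0] with R hR
  rw [RCLike.norm_natCast, Real.norm_of_nonneg (Real.exp_nonneg _), div_mul_eq_mul_div,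
    le_div_iff₀' (mul_pos hc hsum)]
  have hnonempty : (1 : ℝ) ≤ (admissibleWords S w T R).ncard := by
    rw [ncard_admissibleWords hm (fun q => (hmM q).1) hR]
    exact_mod_cast Nat.le_add_left _ _
  calc c * (∑ q ∈ T, Real.exp (-(E * w q)) * U q) * Real.exp (E * R)
    _ = ∑ q ∈ T, c * (U q * Real.exp (E * (R - w q))) := by
      rw [← Finset.mul_sum, sum_mul_exp_sub, mul_assoc]
    _ ≤ ∑ q ∈ T, ((Fintype.card A : ℝ) * (admissibleWords S w (S q) (R - w q)).ncard + 1) :=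
      Finset.sum_le_sum fun q _ => hbound q _ (by linarith [(hmM q).2])
    _ ≤ Fintype.card A * (admissibleWords S w T R).ncard + 1 :=
      sum_card_mul_ncard_admissibleWords_add_one_le hm (fun q => (hmM q).1) hR
    _ ≤ (Fintype.card A + 1) * (admissibleWords S w T R).ncard := by linarith

theorem isTheta_ncard_admissibleWords [Finite A] (hU : IsPerronVector S w E U)
    (hw : ∀ q, 0 < w q) (hS : ∀ p, (S p).Nontrivial) (hT : T.Nontrivial) :
    (fun R => ((admissibleWords S w T R).ncard : ℝ)) =Θ[atTop] fun R => Real.exp (E * R) :=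
  ⟨hU.ncard_admissibleWords_isBigO_exp hw hS hT, hU.exp_isBigO_ncard_admissibleWords hw hT.nonempty⟩

end IsPerronVector

end AdmissibleWords

section ReducedWords

variable {α : Type*} {ℓ : α → ℝ} {E : ℝ}

/-- The length of `g` when the letters `a` and `a⁻¹` have weight `ℓ a`: the infimum of the total
weight over all words representing `g`. -/
noncomputable def weightedNorm (ℓ : α → ℝ) (g : FreeGroup α) : ℝ :=
  sInf {t | ∃ L, FreeGroup.mk L = g ∧ t = (L.map fun p => ℓ p.1).sum}

/-- The exponential growth rate of the balls of `weightedNorm ℓ`. -/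
noncomputable def weightedNormEntropy (ℓ : α → ℝ) : ℝ :=
  limsup (fun R : ℝ => R⁻¹ * Real.log (Nat.card {g : FreeGroup α | weightedNorm ℓ g ≤ R})) atTop

/-- The letters that may follow `p` in a reduced word: all but the inverse of `p`. -/
def reducedSuccessors [Fintype α] [DecidableEq α] (p : α × Bool) : Finset (α × Bool) :=
  Finset.univ.erase (p.1, !p.2)

theorem weightedNorm_eq_sum_toWord [DecidableEq α] (hℓ : ∀ a, 0 ≤ ℓ a) (g : FreeGroup α) :
    weightedNorm ℓ g = (g.toWord.map fun p => ℓ p.1).sum := by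
  refine IsLeast.csInf_eq ⟨⟨g.toWord, FreeGroup.mk_toWord, rfl⟩, ?_⟩
  rintro _ ⟨L, rfl, rfl⟩
  rw [FreeGroup.toWord_mk]
  exact (FreeGroup.reduce.red.sublist.map _).sum_le_sum
    (List.forall_mem_map.2 fun p _ => hℓ p.1)

variable [Fintype α] [DecidableEq α]

theorem isReduced_iff_isChain_reducedSuccessors {L : List (α × Bool)} :
    FreeGroup.IsReduced L ↔ L.IsChain fun p q => q ∈ reducedSuccessors p := by
  have hrel : (fun p q : α × Bool => p.1 = q.1 → p.2 = q.2) =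
      fun p q => q ∈ reducedSuccessors p := by
    ext ⟨a, x⟩ ⟨b, y⟩
    cases x <;> cases y <;> simp [reducedSuccessors, eq_comm]
  rw [FreeGroup.IsReduced, hrel]

theorem natCard_weightedNorm_le (hℓ : ∀ a, 0 ≤ ℓ a) (R : ℝ) :
    Nat.card {g : FreeGroup α | weightedNorm ℓ g ≤ R} =
      (admissibleWords reducedSuccessors (fun p => ℓ p.1) Finset.univ R).ncard := by
  rw [Nat.card_coe_set_eq, ← ncard_image_of_injective _ FreeGroup.toWord_injective]
  congr 1
  ext L
  simp only [admissibleWords, ← isReduced_iff_isChain_reducedSuccessors, mem_image,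
    mem_ofPred_eq, weightedNorm_eq_sum_toWord hℓ, Finset.mem_univ, implies_true, true_and]
  constructor
  · rintro ⟨g, hg, rfl⟩
    exact ⟨FreeGroup.isReduced_toWord, hg⟩
  · rintro ⟨hL, hR⟩
    have hword : (FreeGroup.mk L).toWord = L := FreeGroup.toWord_mk.trans hL.reduce_eq
    exact ⟨FreeGroup.mk L, hword.symm ▸ hR, hword⟩

theorem reducedSuccessors_nontrivial [Nontrivial α] (p : α × Bool) :
    (reducedSuccessors p).Nontrivial := by
  obtain ⟨a, ha⟩ := exists_ne p.1
  refine ⟨(a, true), ?_, (a, false), ?_, ?_⟩ <;> simp [reducedSuccessors, ha]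

theorem isPerronVector_reducedSuccessors (hE : ∑ a, 2 / (Real.exp (E * ℓ a) + 1) = 1) :
    IsPerronVector reducedSuccessors (fun p : α × Bool => ℓ p.1) E
      fun p => 1 - 1 / (Real.exp (E * ℓ p.1) + 1) where
  pos p := by
    have hexp := Real.exp_pos (E * ℓ p.1)
    rw [sub_pos, div_lt_one (by positivity)]
    linarith
  eq_sum p := by
    have hcylinder (a : α) : Real.exp (-(E * ℓ a)) * (1 - 1 / (Real.exp (E * ℓ a) + 1)) =
        1 / (Real.exp (E * ℓ a) + 1) := by
      rw [Real.exp_neg]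
      field_simp
      ring
    have htotal : ∑ q : α × Bool, 1 / (Real.exp (E * ℓ q.1) + 1) = 1 := by
      rw [Fintype.sum_prod_type]
      refine (Finset.sum_congr rfl fun a _ => ?_).trans hE
      rw [Fintype.sum_bool]
      ring
    simp only [hcylinder]
    rw [reducedSuccessors, Finset.sum_erase_eq_sub (Finset.mem_univ _), htotal]

end ReducedWords

theorem weightedEntropy_eq_weightedNormEntropy (ℓ1 ℓ2 : ℝ) :
    weightedEntropy ℓ1 ℓ2 = weightedNormEntropy fun b : Bool => if b then ℓ1 else ℓ2 :=
  rfl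

theorem two_div_add_one_add_two_div_add_one_eq_one_iff {x y : ℝ} (hx : x + 1 ≠ 0)
    (hy : y + 1 ≠ 0) : 2 / (x + 1) + 2 / (y + 1) = 1 ↔ (x - 1) * (y - 1) = 4 := by
  rw [div_add_div _ _ hx hy, div_eq_one_iff_eq (mul_ne_zero hx hy)]
  constructor <;> intro h <;> linear_combination -h

section Entropy

variable {α : Type*} [Fintype α] [Nontrivial α] {ℓ : α → ℝ}

theorem exists_pos_sum_two_div_exp_add_one_eq_one (hℓ : ∀ a, 0 < ℓ a) :
    ∃ E > 0, ∑ a, 2 / (Real.exp (E * ℓ a) + 1) = 1 := by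
  have hcont : ContinuousOn (fun E => ∑ a, 2 / (Real.exp (E * ℓ a) + 1)) (Ici 0) := by
    fun_prop (disch := intros; positivity)
  have hlim : Tendsto (fun E => ∑ a, 2 / (Real.exp (E * ℓ a) + 1)) atTop (𝓝 0) := by
    have hterm (a : α) : Tendsto (fun E => 2 / (Real.exp (E * ℓ a) + 1)) atTop (𝓝 0) :=
      (tendsto_atTop_add_const_right _ _
        (Real.tendsto_exp_atTop.comp (tendsto_id.atTop_mul_const (hℓ a)))).const_div_atTop 2
    simpa only [Finset.sum_const_zero] using
      tendsto_finsetSum Finset.univ fun a _ => hterm a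
  have hzero : ∑ a, 2 / (Real.exp (0 * ℓ a) + 1) = Fintype.card α := by
    norm_num
  have hcard : (1 : ℝ) < Fintype.card α := mod_cast Fintype.one_lt_card
  obtain ⟨E, hE, hroot⟩ := isPreconnected_Ici.intermediate_value_Ioc self_mem_Ici
    (le_principal_iff.2 (Ici_mem_atTop 0)) hcont hlim ⟨one_pos, hzero ▸ hcard.le⟩
  refine ⟨E, lt_of_le_of_ne hE ?_, hroot⟩
  rintro rfl
  exact hcard.ne' (hzero.symm.trans hroot)

theorem tendsto_inv_mul_log_natCard_weightedNorm_le (hℓ : ∀ a, 0 < ℓ a) {E : ℝ}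
    (hE : ∑ a, 2 / (Real.exp (E * ℓ a) + 1) = 1) :
    Tendsto (fun R : ℝ => R⁻¹ * Real.log (Nat.card {g : FreeGroup α | weightedNorm ℓ g ≤ R}))
      atTop (𝓝 E) := by
  classical
  simp only [natCard_weightedNorm_le fun a => (hℓ a).le]
  exact tendsto_inv_mul_log_of_isTheta_exp
    ((isPerronVector_reducedSuccessors hE).isTheta_ncard_admissibleWords (fun p => hℓ p.1)
      reducedSuccessors_nontrivial Finset.univ_nontrivial)

theorem statement11_general (hℓ : ∀ a, 0 < ℓ a) :
    0 < weightedNormEntropy ℓ ∧ ∑ a, 2 / (Real.exp (weightedNormEntropy ℓ * ℓ a) + 1) = 1 := by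
  obtain ⟨E, hE, hroot⟩ := exists_pos_sum_two_div_exp_add_one_eq_one hℓ
  have hentropy : weightedNormEntropy ℓ = E :=
    (tendsto_inv_mul_log_natCard_weightedNorm_le hℓ hroot).limsup_eq
  rw [hentropy]
  exact ⟨hE, hroot⟩

end Entropy

/-- For positive weights `ℓ1, ℓ2` on the two generators of the free group
`F₂`, the entropy `E` of `F₂` with the weighted word distance is a (finite) positive real
number and satisfies `(e^{E·ℓ1} − 1)·(e^{E·ℓ2} − 1) = 4`. -/
theorem statement11 (ℓ1 ℓ2 : ℝ) (hℓ1 : 0 < ℓ1) (hℓ2 : 0 < ℓ2) :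
    0 < weightedEntropy ℓ1 ℓ2 ∧
      (Real.exp (weightedEntropy ℓ1 ℓ2 * ℓ1) - 1) *
        (Real.exp (weightedEntropy ℓ1 ℓ2 * ℓ2) - 1) = 4 := by
  have h := statement11_general (ℓ := fun b : Bool => if b then ℓ1 else ℓ2) (by simp [hℓ1, hℓ2])
  simpa [weightedEntropy_eq_weightedNormEntropy,
    two_div_add_one_add_two_div_add_one_eq_one_iff (add_pos (Real.exp_pos _) one_pos).ne'
      (add_pos (Real.exp_pos _) one_pos).ne'] using h
end

section
/- For every real number x > 0 and every integer k ≥ 1, if e^{−6x} < log(1 + 4/(e^{(4k+10)·x} − 1)), then x ≤ 21/125. Moreover, for every real number x with 0 < x ≤ 21/125, one has 2x < e^{−6x}. -/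
/-!
For the first claim put `t = exp (2 * x)`, so that `exp (-(6 * x)) = t⁻³`, while the argument of
the logarithm is at most `1 + 4 / (t ^ 7 - 1)`. Since `log (1 + y + y ^ 2 / 2) ≤ y`, it suffices
that `4 / (t ^ 7 - 1) ≤ t⁻³ + t⁻⁶ / 2`, which holds from `t = 1.392` on; and `21 / 125` is large
enough for the quadratic Taylor bound to give `1.392 ≤ exp (2 * x)`.
-/

theorem log_one_add_add_sq_div_two_le {y : ℝ} (hy : 0 ≤ y) :
    Real.log (1 + (y + y ^ 2 / 2)) ≤ y := by
  rw [Real.log_le_iff_le_exp (by positivity), ← add_assoc]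
  exact Real.quadratic_le_exp_of_nonneg hy

theorem four_mul_pow_six_le {t : ℝ} (ht : 1.392 ≤ t) :
    4 * t ^ 6 ≤ (t ^ 3 + 1 / 2) * (t ^ 7 - 1) := by
  -- Expanded in powers of `s = t - 1.392`, the difference of the two sides has only
  -- nonnegative coefficients.
  obtain ⟨s, hs, rfl⟩ : ∃ s : ℝ, 0 ≤ s ∧ t = s + 1.392 :=
    ⟨t - 1.392, sub_nonneg.2 ht, (sub_add_cancel t 1.392).symm⟩
  rw [← sub_nonneg]
  ring_nf
  positivity

theorem four_div_pow_seven_sub_one_le {t : ℝ} (ht : 1.392 ≤ t) :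
    4 / (t ^ 7 - 1) ≤ (t ^ 3)⁻¹ + (t ^ 3)⁻¹ ^ 2 / 2 := by
  have : 0 < t := by linarith
  have h_one_lt : 1 < t ^ 7 := one_lt_pow₀ (by linarith) (by norm_num)
  have h_common_denom : (t ^ 3)⁻¹ + (t ^ 3)⁻¹ ^ 2 / 2 = (t ^ 3 + 1 / 2) / t ^ 6 := by
    field_simp
  rw [h_common_denom, div_le_div_iff₀ (sub_pos.2 h_one_lt) (by positivity)]
  exact four_mul_pow_six_le ht

theorem le_exp_two_mul {x : ℝ} (hx : 21 / 125 ≤ x) : 1.392 ≤ Real.exp (2 * x) :=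
  calc (1.392 : ℝ) ≤ 1 + 42 / 125 + (42 / 125) ^ 2 / 2 := by norm_num
    _ ≤ Real.exp (42 / 125) := Real.quadratic_le_exp_of_nonneg (by norm_num)
    _ ≤ Real.exp (2 * x) := Real.exp_le_exp.2 (by linarith)

theorem log_one_add_four_div_exp_sub_one_le {x a : ℝ} (hx : 21 / 125 ≤ x) (ha : 14 ≤ a) :
    Real.log (1 + 4 / (Real.exp (a * x) - 1)) ≤ Real.exp (-(6 * x)) := by
  have h_exp_neg : (Real.exp (2 * x) ^ 3)⁻¹ = Real.exp (-(6 * x)) := by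
    rw [← Real.exp_nat_mul, ← Real.exp_neg]
    ring_nf
  have h_pow_le : Real.exp (2 * x) ^ 7 ≤ Real.exp (a * x) := by
    rw [← Real.exp_nat_mul]
    have h_mul_le : 14 * x ≤ a * x := mul_le_mul_of_nonneg_right ha (by linarith)
    exact Real.exp_le_exp.2 (by push_cast; linarith)
  have ht : 1.392 ≤ Real.exp (2 * x) := le_exp_two_mul hx
  have h_one_lt : 1 < Real.exp (2 * x) ^ 7 := one_lt_pow₀ (by linarith) (by norm_num)
  have h_denom_pos : 0 < Real.exp (a * x) - 1 := by linarith
  have h_div_le : 4 / (Real.exp (a * x) - 1) ≤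
      Real.exp (-(6 * x)) + Real.exp (-(6 * x)) ^ 2 / 2 :=
    calc 4 / (Real.exp (a * x) - 1) ≤ 4 / (Real.exp (2 * x) ^ 7 - 1) := by gcongr
      _ ≤ Real.exp (-(6 * x)) + Real.exp (-(6 * x)) ^ 2 / 2 := by
        rw [← h_exp_neg]
        exact four_div_pow_seven_sub_one_le ht
  calc Real.log (1 + 4 / (Real.exp (a * x) - 1))
      ≤ Real.log (1 + (Real.exp (-(6 * x)) + Real.exp (-(6 * x)) ^ 2 / 2)) := by gcongr
    _ ≤ Real.exp (-(6 * x)) := log_one_add_add_sq_div_two_le (Real.exp_nonneg _)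

theorem two_mul_lt_exp_neg_six_mul {x : ℝ} (hx : x ≤ 21 / 125) :
    2 * x < Real.exp (-(6 * x)) :=
  calc 2 * x ≤ 42 / 125 := by linarith
    _ < (1 - 126 / 125 / (8 : ℕ)) ^ 8 := by norm_num
    _ ≤ Real.exp (-(126 / 125)) := Real.one_sub_div_pow_le_exp_neg (by norm_num)
    _ ≤ Real.exp (-(6 * x)) := Real.exp_le_exp.2 (by linarith)

theorem statement16_general :
    (∀ x a : ℝ, 14 ≤ a →
        Real.exp (-(6 * x)) < Real.log (1 + 4 / (Real.exp (a * x) - 1)) → x < 21 / 125) ∧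
      ∀ x : ℝ, x ≤ 21 / 125 → 2 * x < Real.exp (-(6 * x)) := by
  refine ⟨fun x a ha h_lt => ?_, fun _ => two_mul_lt_exp_neg_six_mul⟩
  by_contra! hx
  exact h_lt.not_ge (log_one_add_four_div_exp_sub_one_le hx ha)

/-- For every real `x > 0` and integer `k ≥ 1`, if
`e^{−6x} < log(1 + 4/(e^{(4k+10)x} − 1))` then `x ≤ 21/125`; moreover for every real `x`
with `0 < x ≤ 21/125` one has `2x < e^{−6x}`. -/
theorem statement16 :
    (∀ (x : ℝ) (k : ℕ), 0 < x → 1 ≤ k →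
        Real.exp (-(6 * x)) <
            Real.log (1 + 4 / (Real.exp (((4 * k : ℝ) + 10) * x) - 1)) →
          x ≤ 21 / 125) ∧
      (∀ x : ℝ, 0 < x → x ≤ 21 / 125 → 2 * x < Real.exp (-(6 * x))) := by
  refine ⟨fun x k _ hk h_lt => (statement16_general.1 x (4 * k + 10) ?_ h_lt).le,
    fun x _ => statement16_general.2 x⟩
  linarith [show (1 : ℝ) ≤ k from mod_cast hk]
end
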